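/- Fix n ≥ 1, ε ≥ 0, and δ ≥ 0. For every randomized algorithm A : (Fin n × {0,1} × {0,1} → ℝ) → PMF({0,1}^n) that is (ε,δ)-differentially private with respect to ℓ1-neighboring weight functions, there exists a weight function w : Fin n × {0,1} × {0,1} → {0,1} such that the expected approximation error of the perfect matching released by A satisfies E_{y ← A(w)}[M_w(y)] − min_{z ∈ {0,1}^n} M_w(z) ≥ n · (1 − (1+e^ε)δ) / (1 + e^{2ε}). (The graph has V = 4n vertices, so this bound equals (V/4)·(1 − (1+e^ε)δ)/(1 + e^{2ε}).) -/

import Mathlib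

/-!
The hard instances are indexed by strings `x ∈ {0,1}^n`: in `hardWt x` the edge
`L(i,0)–R(i,1-x_i)` has weight `1` and every other edge weight `0`, so that matching `x` has
weight `0` and the weight of `y` is the number of gadgets with `y i ≠ x i`.

Let `errProb A x i` be the probability that gadget `i` is wrong on the instance `x`, and let `x'`
be `x` with bit `i` flipped. The two instances are joined by a path of two neighboring steps
(through the weights that vanish on gadget `i`), and being right for `x` means being wrong
for `x'`, hence `1 - errProb A x i ≤ e^{2ε} * errProb A x' i + (1 + e^ε) * δ`
(`one_sub_errProb_le`). Flipping a bit permutes the strings, so summing over `x` bounds the average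
of `errProb A · i` from below; summing over `i`, the average error over all `x` is at least
the claimed bound, and for some `x` the error is at least the average.
-/

open scoped ENNReal NNReal

/-- The probability that a sample from `p` lands in the set `S`. -/
noncomputable def prob {Y : Type*} (p : PMF Y) (S : Set Y) : ℝ≥0∞ :=
  p.toOuterMeasure S

/-- `A` is `(ε,δ)`-differentially private with respect to the neighboring relation `N`. -/
def IsDP {X Y : Type*} (N : X → X → Prop) (A : X → PMF Y) (ε δ : ℝ) : Prop :=
  ∀ x x', N x x' → ∀ S : Set Y,
    prob (A x) S ≤ ENNReal.ofReal (Real.exp ε) * prob (A x') S + ENNReal.ofReal δ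

/-- The expected value of `f` under the distribution `p` (finite output space). -/
noncomputable def expVal {Y : Type*} [Fintype Y] (p : PMF Y) (f : Y → ℝ) : ℝ :=
  ∑ y, (p y).toReal * f y

/-- Two real-valued weight functions on the edges of the matching lower-bound graph are
neighboring if their `ℓ1` distance is at most `1`. -/
def L1NeighborR {ι : Type*} [Fintype ι] (w w' : ι → ℝ) : Prop :=
  ∑ i, |w i - w' i| ≤ 1

/-- The weight of the perfect matching encoded by `y : Fin n → Bool` in the gadget graph:
matching `y` uses in gadget `i` the edges `L(i,0)–R(i,y_i)` and `L(i,1)–R(i,1-y_i)`. -/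
def Mw {n : ℕ} (w : Fin n × Bool × Bool → ℝ) (y : Fin n → Bool) : ℝ :=
  ∑ i, (w (i, false, y i) + w (i, true, !(y i)))

/-- The `{0,1}`-valued weights whose unique bad edge in gadget `i` is `L(i,0)–R(i,1-x_i)`. -/
def hardWt {n : ℕ} (x : Fin n → Bool) : Fin n × Bool × Bool → ℝ :=
  fun p => if p.2.1 = false ∧ p.2.2 ≠ x p.1 then 1 else 0

/-- The weights `hardWt x` set to `0` on gadget `i`; these do not depend on `x i`. -/
def midWt {n : ℕ} (x : Fin n → Bool) (i : Fin n) : Fin n × Bool × Bool → ℝ :=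
  fun p => if p.1 = i then 0 else hardWt x p

/-- The string `x` with bit `i` flipped. -/
def flipBit {n : ℕ} (i : Fin n) (x : Fin n → Bool) : Fin n → Bool :=
  Function.update x i (!(x i))

/-- The probability that the output of `A` on the instance `x` is wrong in gadget `i`. -/
noncomputable def errProb {n : ℕ} (A : (Fin n × Bool × Bool → ℝ) → PMF (Fin n → Bool))
    (x : Fin n → Bool) (i : Fin n) : ℝ :=
  (prob (A (hardWt x)) {y | y i ≠ x i}).toReal

lemma flipBit_involutive {n : ℕ} (i : Fin n) : Function.Involutive (flipBit i) := by
  intro x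
  simp [flipBit]

lemma midWt_flipBit {n : ℕ} (x : Fin n → Bool) (i : Fin n) :
    midWt (flipBit i x) i = midWt x i := by
  funext p
  unfold midWt hardWt flipBit
  by_cases h : p.1 = i <;> simp [h]

lemma sum_abs_hardWt_sub_midWt {n : ℕ} (x : Fin n → Bool) (i : Fin n) :
    ∑ p, |hardWt x p - midWt x i p| = 1 := by
  have h : ∀ p, |hardWt x p - midWt x i p| = if p = (i, false, !(x i)) then 1 else 0 := by
    rintro ⟨j, b, c⟩
    by_cases hj : j = i
    · subst hj
      cases b <;> cases c <;> cases hx : x j <;> simp [hardWt, midWt, hx]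
    · simp [midWt, hj]
  simp [h]

lemma Mw_hardWt {n : ℕ} (x y : Fin n → Bool) :
    Mw (hardWt x) y = ∑ i, if y i ≠ x i then 1 else 0 := by
  simp [Mw, hardWt]

lemma prob_ne_top {Y : Type*} (p : PMF Y) (S : Set Y) : prob p S ≠ ⊤ :=
  ne_top_of_le_ne_top p.tsum_coe_ne_top <| by
    rw [prob, PMF.toOuterMeasure_apply]
    exact ENNReal.tsum_le_tsum fun y => Set.indicator_le_self S p y

lemma toReal_prob {Y : Type*} [Fintype Y] (p : PMF Y) (S : Set Y) [DecidablePred (· ∈ S)] :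
    (prob p S).toReal = ∑ y, if y ∈ S then (p y).toReal else 0 := by
  classical
  rw [prob, PMF.toOuterMeasure_apply_fintype, ENNReal.toReal_sum]
  · refine Finset.sum_congr rfl fun y _ => ?_
    by_cases h : y ∈ S <;> simp [h]
  · intro y _
    by_cases h : y ∈ S <;> simp [h, p.apply_ne_top]

lemma sum_toReal_eq_one {Y : Type*} [Fintype Y] (p : PMF Y) : ∑ y, (p y).toReal = 1 := by
  rw [← ENNReal.toReal_sum fun y _ => p.apply_ne_top y, ← tsum_fintype (L := .unconditional _),
    p.tsum_coe, ENNReal.toReal_one]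

/-- The privacy inequality, read in `ℝ`. -/
lemma IsDP.toReal_le {X Y : Type*} {N : X → X → Prop} {A : X → PMF Y} {ε δ : ℝ} (hδ : 0 ≤ δ)
    (h : IsDP N A ε δ) {x x' : X} (hx : N x x') (S : Set Y) :
    (prob (A x) S).toReal ≤ Real.exp ε * (prob (A x') S).toReal + δ := by
  have hfin : ENNReal.ofReal (Real.exp ε) * prob (A x') S ≠ ⊤ :=
    ENNReal.mul_ne_top ENNReal.ofReal_ne_top (prob_ne_top _ _)
  have := ENNReal.toReal_mono (ENNReal.add_ne_top.2 ⟨hfin, ENNReal.ofReal_ne_top⟩) (h x x' hx S)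
  rwa [ENNReal.toReal_add hfin ENNReal.ofReal_ne_top, ENNReal.toReal_mul,
    ENNReal.toReal_ofReal (Real.exp_pos ε).le, ENNReal.toReal_ofReal hδ] at this

/-- The expected weight on the instance `x` is the expected number of wrong gadgets. -/
lemma expVal_hardWt {n : ℕ} (A : (Fin n × Bool × Bool → ℝ) → PMF (Fin n → Bool))
    (x : Fin n → Bool) :
    expVal (A (hardWt x)) (Mw (hardWt x)) = ∑ i, errProb A x i := by
  simp only [expVal, Mw_hardWt, errProb, toReal_prob, Finset.mul_sum]
  rw [Finset.sum_comm]
  simp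

/-- Group privacy along the two-step path from `hardWt x` to `hardWt (flipBit i x)`. -/
lemma one_sub_errProb_le {n : ℕ} {ε δ : ℝ} (hδ : 0 ≤ δ)
    {A : (Fin n × Bool × Bool → ℝ) → PMF (Fin n → Bool)} (hDP : IsDP L1NeighborR A ε δ)
    (x : Fin n → Bool) (i : Fin n) :
    1 - errProb A x i ≤
      Real.exp (2 * ε) * errProb A (flipBit i x) i + (1 + Real.exp ε) * δ := by
  have h1 : L1NeighborR (hardWt x) (midWt x i) := (sum_abs_hardWt_sub_midWt x i).le
  have h2 : L1NeighborR (midWt x i) (hardWt (flipBit i x)) := by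
    rw [← midWt_flipBit]
    simpa only [L1NeighborR, abs_sub_comm] using (sum_abs_hardWt_sub_midWt (flipBit i x) i).le
  -- Being right in gadget `i` for `x` is being wrong there for the flipped string.
  have hS : {y : Fin n → Bool | y i ≠ flipBit i x i} = {y | y i = x i} := by
    ext y
    simp [flipBit]
  have hcompl : (prob (A (hardWt x)) {y | y i = x i}).toReal = 1 - errProb A x i := by
    rw [eq_sub_iff_add_eq, errProb, toReal_prob, toReal_prob, ← Finset.sum_add_distrib,
      ← sum_toReal_eq_one (A (hardWt x))]
    refine Finset.sum_congr rfl fun y _ => ?_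
    by_cases h : y i = x i <;> simp [h]
  have e1 := hDP.toReal_le hδ h1 {y | y i = x i}
  have e2 := hDP.toReal_le hδ h2 {y | y i = x i}
  rw [hcompl] at e1
  rw [errProb.eq_def A (flipBit i x), hS, two_mul, Real.exp_add]
  nlinarith [mul_le_mul_of_nonneg_left e2 (Real.exp_pos ε).le]

/-- **Lower bound for private minimum-weight perfect matchings.**  Any
`(ε,δ)`-differentially private algorithm releasing a perfect matching of the gadget graph
(on `4n` vertices) has, on some `{0,1}`-valued weight function, expected approximation error
at least `n·(1-(1+e^ε)δ)/(1+e^{2ε})`. -/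
theorem matching_lower_bound (n : ℕ) (hn : 1 ≤ n) (ε δ : ℝ) (hε : 0 ≤ ε) (hδ : 0 ≤ δ)
    (A : (Fin n × Bool × Bool → ℝ) → PMF (Fin n → Bool))
    (hDP : IsDP L1NeighborR A ε δ) :
    ∃ w : Fin n × Bool × Bool → ℝ, (∀ p, w p = 0 ∨ w p = 1) ∧
      (n : ℝ) * (1 - (1 + Real.exp ε) * δ) / (1 + Real.exp (2 * ε)) ≤
        expVal (A w) (Mw w) - ⨅ z : Fin n → Bool, Mw w z := by
  have hpos : 0 < 1 + Real.exp (2 * ε) := by positivity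
  set c := (1 - (1 + Real.exp ε) * δ) / (1 + Real.exp (2 * ε)) with hc
  have hgadget : ∀ i, ∑ _x : Fin n → Bool, c ≤ ∑ x, errProb A x i := by
    intro i
    have hflip : ∑ x, errProb A (flipBit i x) i = ∑ x, errProb A x i :=
      Equiv.sum_comp (flipBit_involutive i).toPerm fun x => errProb A x i
    have h := Finset.sum_le_sum fun x (_ : x ∈ Finset.univ) => one_sub_errProb_le hδ hDP x i
    rw [Finset.sum_add_distrib, Finset.sum_sub_distrib, ← Finset.mul_sum, hflip] at h
    simp only [Finset.sum_const, nsmul_eq_mul] at h ⊢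
    rw [hc, mul_div_assoc', div_le_iff₀ hpos]
    linarith
  have hsum : ∑ _x : Fin n → Bool, (n : ℝ) * c ≤ ∑ x, ∑ i, errProb A x i := by
    rw [Finset.sum_comm, ← Finset.mul_sum]
    simpa using Finset.sum_le_sum fun i (_ : i ∈ Finset.univ) => hgadget i
  obtain ⟨x, -, hx⟩ := Finset.exists_le_of_sum_le Finset.univ_nonempty hsum
  refine ⟨hardWt x, fun p => ?_, ?_⟩
  · unfold hardWt
    split_ifs <;> simp
  · have hmin : ⨅ z, Mw (hardWt x) z ≤ 0 :=
      (ciInf_le (Set.finite_range _).bddBelow x).trans_eq (by simp [Mw_hardWt])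
    rw [expVal_hardWt, mul_div_assoc]
    linarith
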